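/- Let X ⊆ ℝⁿ be compact, let f : X → ℝ be continuous with f(y) ≥ m > 0 for all y ∈ X, and let μ be the Borel measure on ℝⁿ given by dμ = f dλ on X (i.e. μ(A) = ∫_{A ∩ X} f dλ). Let z ∈ ℝⁿ and ε > 0 be such that the closed ball B(z, ε) is contained in X, and let φ : ℝⁿ → [0, ∞) be a square-integrable function supported in B(z, ε). Then for every natural number d, sup { (∫_{ℝⁿ} φ(y) p(y) dλ(y))² : p is a real polynomial of total degree at most d with ∫ p(y)² dμ(y) = 1 } ≤ (1/m) ∫_{ℝⁿ} φ(y)² dλ(y). In particular this supremum is bounded uniformly in d. -/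

import Mathlib

open MeasureTheory MvPolynomial

/-!
Since `f ≥ m` on `X`, the measure `μ` dominates `m • λ` there, so a polynomial with unit norm in
`L²(μ)` has squared norm at most `1 / m` in `L²(X, λ)`. As `φ` vanishes off `X`, Cauchy–Schwarz in
`L²(X, λ)` bounds `(∫ φ p dλ)²` by `(1 / m) ∫ φ² dλ`, whatever the degree of `p`.
-/

section

variable {α : Type*} [MeasurableSpace α] {μ ν : Measure α} {φ q : α → ℝ} {m : ℝ}

theorem inner_toLp_eq_integral_inner {𝕜 E : Type*} [RCLike 𝕜] [NormedAddCommGroup E]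
    [InnerProductSpace 𝕜 E] {g h : α → E} (hg : MemLp g 2 ν) (hh : MemLp h 2 ν) :
    inner 𝕜 (hg.toLp g) (hh.toLp h) = ∫ y, inner 𝕜 (g y) (h y) ∂ν := by
  rw [L2.inner_def]
  refine integral_congr_ae ?_
  filter_upwards [hg.coeFn_toLp, hh.coeFn_toLp] with y hgy hhy
  rw [hgy, hhy]

theorem sq_integral_mul_le_integral_sq_mul_integral_sq (hφ : MemLp φ 2 ν) (hq : MemLp q 2 ν) :
    (∫ y, φ y * q y ∂ν) ^ 2 ≤ (∫ y, φ y ^ 2 ∂ν) * ∫ y, q y ^ 2 ∂ν := by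
  simpa only [inner_toLp_eq_integral_inner, RCLike.inner_apply', conj_trivial, ← pow_two] using
    real_inner_mul_inner_self_le (hφ.toLp φ) (hq.toLp q)

theorem smul_le_withDensity_of_ae_le {c : ENNReal} {f : α → ENNReal} (hf : ∀ᵐ y ∂ν, c ≤ f y) :
    c • ν ≤ ν.withDensity f :=
  withDensity_const (μ := ν) c ▸ withDensity_mono hf

theorem ofReal_smul_restrict_le_withDensity {X : Set α} (hX : MeasurableSet X) {f : α → ℝ}
    (hf : ∀ y ∈ X, m ≤ f y) :
    ENNReal.ofReal m • ν.restrict X ≤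
      (ν.restrict X).withDensity fun y => ENNReal.ofReal (f y) :=
  smul_le_withDensity_of_ae_le <| ae_restrict_of_forall_mem hX fun y hy =>
    ENNReal.ofReal_le_ofReal (hf y hy)

theorem memLp_of_smul_measure_le {E : Type*} [NormedAddCommGroup E] {g : α → E} {p c : ENNReal}
    (hc : c ≠ 0) (hc' : c ≠ ⊤) (hμ : c • ν ≤ μ) (hg : MemLp g p μ) : MemLp g p ν := by
  simpa only [smul_smul, ENNReal.inv_mul_cancel hc hc', one_smul] using
    (hg.mono_measure hμ).smul_measure (ENNReal.inv_ne_top.2 hc)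

theorem integral_le_of_ofReal_smul_measure_le {g : α → ℝ} (hm : 0 < m)
    (hμ : ENNReal.ofReal m • ν ≤ μ) (hg : 0 ≤ᵐ[μ] g) (hg_int : Integrable g μ) :
    ∫ y, g y ∂ν ≤ (1 / m) * ∫ y, g y ∂μ := by
  have mul_integral_le : m * ∫ y, g y ∂ν ≤ ∫ y, g y ∂μ := by
    simpa only [integral_smul_measure, ENNReal.toReal_ofReal hm.le, smul_eq_mul] using
      integral_mono_measure hμ hg hg_int
  rwa [one_div_mul_eq_div, le_div_iff₀' hm]

theorem sq_integral_mul_le_of_ofReal_smul_restrict_le {X : Set α} (hm : 0 < m)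
    (hμ : ENNReal.ofReal m • ν.restrict X ≤ μ) (hφ : MemLp φ 2 ν)
    (hφX : Function.support φ ⊆ X) (hq : MemLp q 2 μ) :
    (∫ y, φ y * q y ∂ν) ^ 2 ≤ (1 / m) * (∫ y, φ y ^ 2 ∂ν) * ∫ y, q y ^ 2 ∂μ := by
  have φ_eq_zero (y : α) (hy : y ∉ X) : φ y = 0 :=
    Function.notMem_support.1 fun hφy => hy (hφX hφy)
  calc (∫ y, φ y * q y ∂ν) ^ 2
      = (∫ y in X, φ y * q y ∂ν) ^ 2 := by
        rw [setIntegral_eq_integral_of_forall_compl_eq_zero fun y hy => by simp [φ_eq_zero y hy]]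
    _ ≤ (∫ y in X, φ y ^ 2 ∂ν) * ∫ y in X, q y ^ 2 ∂ν :=
        sq_integral_mul_le_integral_sq_mul_integral_sq (hφ.restrict X)
          (memLp_of_smul_measure_le (ENNReal.ofReal_pos.2 hm).ne' ENNReal.ofReal_ne_top hμ hq)
    _ ≤ (∫ y in X, φ y ^ 2 ∂ν) * ((1 / m) * ∫ y, q y ^ 2 ∂μ) := by
        gcongr
        exact integral_le_of_ofReal_smul_measure_le hm hμ (ae_of_all _ fun y => sq_nonneg (q y))
          hq.integrable_sq
    _ = (1 / m) * (∫ y, φ y ^ 2 ∂ν) * ∫ y, q y ^ 2 ∂μ := by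
        rw [setIntegral_eq_integral_of_forall_compl_eq_zero fun y hy => by simp [φ_eq_zero y hy]]
        ring

theorem smcd_on_support_bounded_general {ι : Type*} {X : Set α} (hm : 0 < m)
    (hμ : ENNReal.ofReal m • ν.restrict X ≤ μ) (hφ : MemLp φ 2 ν)
    (hφX : Function.support φ ⊆ X) (s : Set ι) (p : ι → α → ℝ)
    (hp : ∀ i ∈ s, AEStronglyMeasurable (p i) μ) :
    sSup {t : ℝ | ∃ i ∈ s, (∫ y, p i y ^ 2 ∂μ) = 1 ∧ t = (∫ y, φ y * p i y ∂ν) ^ 2} ≤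
      (1 / m) * ∫ y, φ y ^ 2 ∂ν := by
  have bound_nonneg : 0 ≤ (1 / m) * ∫ y, φ y ^ 2 ∂ν :=
    mul_nonneg (one_div_pos.2 hm).le (integral_nonneg fun y => sq_nonneg (φ y))
  refine Real.sSup_le ?_ bound_nonneg
  rintro t ⟨i, hi, integral_sq_eq_one, rfl⟩
  -- A non-integrable square would have integral `0` rather than `1`.
  have integrable_sq : Integrable (fun y => p i y ^ 2) μ :=
    .of_integral_ne_zero (integral_sq_eq_one ▸ one_ne_zero)
  simpa only [integral_sq_eq_one, mul_one] using
    sq_integral_mul_le_of_ofReal_smul_restrict_le hm hμ hφ hφX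
      ((memLp_two_iff_integrable_sq (hp i hi)).2 integrable_sq)

end

theorem continuous_eval_euclideanSpace {σ : Type*} (p : MvPolynomial σ ℝ) :
    Continuous fun y : EuclideanSpace ℝ σ => eval y p :=
  (MvPolynomial.continuous_eval p).comp (PiLp.continuous_ofLp 2 _)

/-- On-support uniform boundedness of the support-locator mollified
Christoffel–Darboux polynomial: if `μ = f dλ` on the compact set `X` with
`f ≥ m > 0` continuous, and `φ` is a nonnegative square-integrable mollifier
supported in a closed ball `B(z, ε) ⊆ X`, then for every degree `d`,
`sup { (∫ φ p dλ)² : deg p ≤ d, ‖p‖_{L²(μ)} = 1 } ≤ (1/m) ∫ φ² dλ`;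
in particular this supremum is bounded uniformly in `d`. -/
theorem smcd_on_support_bounded {n : ℕ}
    (X : Set (EuclideanSpace ℝ (Fin n))) (hXc : IsCompact X)
    (f : EuclideanSpace ℝ (Fin n) → ℝ) (hf : ContinuousOn f X)
    (m : ℝ) (hm : 0 < m) (hfm : ∀ y ∈ X, m ≤ f y)
    (μ : Measure (EuclideanSpace ℝ (Fin n)))
    (hμ : μ = (volume.restrict X).withDensity fun y => ENNReal.ofReal (f y))
    (z : EuclideanSpace ℝ (Fin n)) (ε : ℝ) (hε : 0 < ε)
    (hball : Metric.closedBall z ε ⊆ X)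
    (φ : EuclideanSpace ℝ (Fin n) → ℝ) (hφnn : ∀ y, 0 ≤ φ y)
    (hφ2 : MemLp φ 2 volume)
    (hφsupp : Function.support φ ⊆ Metric.closedBall z ε) (d : ℕ) :
    sSup {t : ℝ | ∃ p : MvPolynomial (Fin n) ℝ, p.totalDegree ≤ d ∧
        (∫ y, (eval y p) ^ 2 ∂μ) = 1 ∧ t = (∫ y, φ y * eval y p) ^ 2} ≤
      (1 / m) * ∫ y, (φ y) ^ 2 := by
  exact smcd_on_support_bounded_general hm
    (hμ ▸ ofReal_smul_restrict_le_withDensity hXc.measurableSet hfm) hφ2 (hφsupp.trans hball)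
    {p | p.totalDegree ≤ d} (fun p y => eval y p)
    fun p _ => (continuous_eval_euclideanSpace p).aestronglyMeasurable
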